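/- arXiv:1712.04730 — 3 statements merged into one kernel-verified Lean document; each statement's English description precedes it below -/
import Mathlib

section
/- For every integer n ≥ 2, every real ψ with 0 < ψ < 1 and every real ω > 0, one has Σ_{y=0}^{n} y(y−1) · C(n,y) ψ^y (1−ψ)^{n−y} ω^{(n−y)y} = n(n−1) ψ² K_{n,2}(ψ,ω); consequently the variance of the (L)MBD(ψ,ω) satisfies V_{n,ψ,ω} = n ψ η where η = τ_1(ψ,ω) − ψ( n τ_1(ψ,ω)² − (n−1) τ_2(ψ,ω) ). -/
open Filter Finset

/-- `K n a ψ ω = Σ_{i=0}^{n−a} C(n−a,i) ψ^i (1−ψ)^{n−a−i} ω^{(n−a−i)(i+a)}`. -/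
noncomputable def K (n a : ℕ) (ψ ω : ℝ) : ℝ :=
  ∑ i ∈ Finset.range (n - a + 1),
    (Nat.choose (n - a) i : ℝ) * ψ ^ i * (1 - ψ) ^ (n - a - i) * ω ^ ((n - a - i) * (i + a))

/-- `τ j = K n j / K n 0`. -/
noncomputable def τ (n j : ℕ) (ψ ω : ℝ) : ℝ := K n j ψ ω / K n 0 ψ ω

/-- pmf of the (L)MBD. -/
noncomputable def lmbd (n : ℕ) (ψ ω : ℝ) (y : ℕ) : ℝ :=
  (Nat.choose n y : ℝ) * ψ ^ y * (1 - ψ) ^ (n - y) * ω ^ ((n - y) * y) / K n 0 ψ ω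

/-- mean of the (L)MBD. -/
noncomputable def lmbdMean (n : ℕ) (ψ ω : ℝ) : ℝ :=
  ∑ y ∈ Finset.range (n + 1), (y : ℝ) * lmbd n ψ ω y

/-- variance of the (L)MBD. -/
noncomputable def lmbdVar (n : ℕ) (ψ ω : ℝ) : ℝ :=
  ∑ y ∈ Finset.range (n + 1), ((y : ℝ) - lmbdMean n ψ ω) ^ 2 * lmbd n ψ ω y

/-!
For `a ≤ y`, the absorption identity `(y)ₐ * C(n, y) = (n)ₐ * C(n - a, y - a)` pulls the falling
factorial out of a binomially weighted sum and shifts the index by `a`. Applied to the weights of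
the (L)MBD, it shows that the `a`-th factorial moment is `(n)ₐ ψ ^ a τ_a`. The variance is
`E[Y (Y - 1)] + E[Y] - E[Y] ^ 2`, so only `a = 0, 1, 2` enter.
-/

theorem add_descFactorial_mul_choose (n a i : ℕ) :
    (i + a).descFactorial a * n.choose (i + a) = n.descFactorial a * (n - a).choose i := by
  have choose_mul_choose :
      n.choose (i + a) * (i + a).choose a = n.choose a * (n - a).choose i := by
    simpa only [Nat.add_sub_cancel] using Nat.choose_mul (n := n) (Nat.le_add_left a i)
  rw [Nat.descFactorial_eq_factorial_mul_choose, Nat.descFactorial_eq_factorial_mul_choose,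
    mul_assoc, mul_assoc, mul_comm ((i + a).choose a), choose_mul_choose]

theorem sum_descFactorial_mul_choose_mul {R : Type*} [Semiring R] (n a : ℕ) (f : ℕ → R) :
    ∑ y ∈ range (n + 1), (y.descFactorial a : R) * (n.choose y * f y) =
      n.descFactorial a * ∑ i ∈ range (n - a + 1), (n - a).choose i * f (i + a) := by
  have descFactorial_eq_zero {y : ℕ} (hy : y < a) : (y.descFactorial a : R) = 0 := by
    rw [Nat.descFactorial_of_lt hy, Nat.cast_zero]
  obtain hna | han := lt_or_ge n a
  · rw [descFactorial_eq_zero hna, zero_mul]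
    refine sum_eq_zero fun y hy => ?_
    rw [descFactorial_eq_zero ((mem_range_succ_iff.1 hy).trans_lt hna), zero_mul]
  · have initial_eq_zero :
        ∑ y ∈ range a, (y.descFactorial a : R) * (n.choose y * f y) = 0 :=
      sum_eq_zero fun y hy => by rw [descFactorial_eq_zero (mem_range.1 hy), zero_mul]
    rw [show n + 1 = a + (n - a + 1) by omega, sum_range_add, initial_eq_zero, zero_add, mul_sum]
    refine sum_congr rfl fun i _ => ?_
    rw [add_comm a i, ← mul_assoc, ← mul_assoc, ← Nat.cast_mul, ← Nat.cast_mul,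
      add_descFactorial_mul_choose]

theorem sum_sub_sq_mul_eq {ι R : Type*} [CommRing R] (s : Finset ι) (p x : ι → R)
    (hp : ∑ i ∈ s, p i = 1) :
    ∑ i ∈ s, (x i - ∑ j ∈ s, x j * p j) ^ 2 * p i =
      ∑ i ∈ s, x i * (x i - 1) * p i + ∑ i ∈ s, x i * p i - (∑ i ∈ s, x i * p i) ^ 2 := by
  set μ := ∑ i ∈ s, x i * p i with hμ
  calc ∑ i ∈ s, (x i - μ) ^ 2 * p i
      = ∑ i ∈ s, (x i * (x i - 1) * p i + (1 - 2 * μ) * (x i * p i) + μ ^ 2 * p i) :=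
        sum_congr rfl fun i _ => by ring
    _ = ∑ i ∈ s, x i * (x i - 1) * p i + (1 - 2 * μ) * μ + μ ^ 2 * 1 := by
        rw [sum_add_distrib, sum_add_distrib, ← mul_sum, ← mul_sum, ← hμ, hp]
    _ = ∑ i ∈ s, x i * (x i - 1) * p i + μ - μ ^ 2 := by ring

theorem K_pos (n a : ℕ) {ψ ω : ℝ} (hψ0 : 0 < ψ) (hψ1 : ψ < 1) (hω : 0 < ω) : 0 < K n a ψ ω := by
  refine sum_pos (fun i hi => ?_) nonempty_range_add_one
  have : 0 < 1 - ψ := sub_pos.2 hψ1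
  have : 0 < (n - a).choose i := Nat.choose_pos (mem_range_succ_iff.1 hi)
  positivity

section FactorialMoments

variable (n a : ℕ) (ψ ω : ℝ)

theorem sum_descFactorial_mul_weight :
    ∑ y ∈ range (n + 1), (y.descFactorial a : ℝ) *
        (n.choose y * ψ ^ y * (1 - ψ) ^ (n - y) * ω ^ ((n - y) * y)) =
      n.descFactorial a * ψ ^ a * K n a ψ ω := by
  have h := sum_descFactorial_mul_choose_mul n a
    fun y => ψ ^ y * (1 - ψ) ^ (n - y) * ω ^ ((n - y) * y)
  simp only [← mul_assoc] at h ⊢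
  rw [h, K, mul_sum, mul_sum]
  refine sum_congr rfl fun i _ => ?_
  rw [show n - (i + a) = n - a - i by omega]
  ring

theorem sum_descFactorial_mul_lmbd :
    ∑ y ∈ range (n + 1), (y.descFactorial a : ℝ) * lmbd n ψ ω y =
      n.descFactorial a * ψ ^ a * τ n a ψ ω := by
  simp only [lmbd, τ, ← mul_div_assoc]
  rw [← sum_div, sum_descFactorial_mul_weight]

theorem lmbdMean_eq : lmbdMean n ψ ω = n * ψ * τ n 1 ψ ω := by
  simpa only [lmbdMean, Nat.descFactorial_one, pow_one] using sum_descFactorial_mul_lmbd n 1 ψ ω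

theorem sum_mul_sub_one_mul_lmbd :
    ∑ y ∈ range (n + 1), (y : ℝ) * (y - 1) * lmbd n ψ ω y =
      n * (n - 1) * ψ ^ 2 * τ n 2 ψ ω := by
  simpa only [Nat.cast_descFactorial_two] using sum_descFactorial_mul_lmbd n 2 ψ ω

end FactorialMoments

theorem sum_lmbd {n : ℕ} {ψ ω : ℝ} (hK : K n 0 ψ ω ≠ 0) :
    ∑ y ∈ range (n + 1), lmbd n ψ ω y = 1 := by
  simpa only [Nat.descFactorial_zero, Nat.cast_one, one_mul, pow_zero, τ, div_self hK]
    using sum_descFactorial_mul_lmbd n 0 ψ ω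

theorem lmbdVar_eq_add_sub_sq {n : ℕ} {ψ ω : ℝ} (hK : K n 0 ψ ω ≠ 0) :
    lmbdVar n ψ ω = ∑ y ∈ range (n + 1), (y : ℝ) * (y - 1) * lmbd n ψ ω y +
      lmbdMean n ψ ω - lmbdMean n ψ ω ^ 2 :=
  sum_sub_sq_mul_eq _ (lmbd n ψ ω) _ (sum_lmbd hK)

theorem stmt_1_general (n : ℕ) {ψ ω : ℝ} (hK : K n 0 ψ ω ≠ 0) :
    (∑ y ∈ range (n + 1), (y : ℝ) * (y - 1) *
        (n.choose y * ψ ^ y * (1 - ψ) ^ (n - y) * ω ^ ((n - y) * y))) =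
      n * (n - 1) * ψ ^ 2 * K n 2 ψ ω ∧
    lmbdVar n ψ ω =
      n * ψ * (τ n 1 ψ ω - ψ * (n * τ n 1 ψ ω ^ 2 - (n - 1) * τ n 2 ψ ω)) := by
  constructor
  · simpa only [Nat.cast_descFactorial_two] using sum_descFactorial_mul_weight n 2 ψ ω
  · rw [lmbdVar_eq_add_sub_sq hK, sum_mul_sub_one_mul_lmbd, lmbdMean_eq]
    ring

theorem stmt_1 (n : ℕ) (hn : 2 ≤ n) (ψ : ℝ) (hψ0 : 0 < ψ) (hψ1 : ψ < 1)
    (ω : ℝ) (hω : 0 < ω) :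
    (∑ y ∈ Finset.range (n + 1),
        (y : ℝ) * ((y : ℝ) - 1) *
          ((Nat.choose n y : ℝ) * ψ ^ y * (1 - ψ) ^ (n - y) * ω ^ ((n - y) * y)))
      = (n : ℝ) * ((n : ℝ) - 1) * ψ ^ 2 * K n 2 ψ ω ∧
    lmbdVar n ψ ω =
      (n : ℝ) * ψ *
        (τ n 1 ψ ω - ψ * ((n : ℝ) * (τ n 1 ψ ω) ^ 2 - ((n : ℝ) - 1) * τ n 2 ψ ω)) :=
  stmt_1_general n (K_pos n 0 hψ0 hψ1 hω).ne'
end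

section
/- Fix an integer n ≥ 1 and a real ψ with 0 < ψ < 1. Then, as ω → 0 from the right, the mean E_{n,ψ,ω} of the (L)MBD(ψ,ω) tends to n ψ^n / (ψ^n + (1−ψ)^n). -/
open Filter Finset

/-!
The mean is a quotient of two polynomials in `ω`. At `ω = 0` the factor `ω ^ ((n - y) * y)` leaves
only the terms `y = 0` and `y = n`, so the denominator becomes `ψ ^ n + (1 - ψ) ^ n`. This is
positive because `ψ + (1 - ψ) > 0`, so the mean is continuous at `0` and its limit is its value
there.
-/

theorem sum_range_succ_mul_zero_pow {R : Type*} [Semiring R] {n : ℕ} (hn : n ≠ 0) (f : ℕ → R) :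
    ∑ y ∈ range (n + 1), f y * 0 ^ ((n - y) * y) = f n + f 0 := by
  rw [sum_eq_add_of_mem n 0 (self_mem_range_succ n) (by simp) hn]
  · simp
  · intro y hy ⟨hyn, hy0⟩
    have hlt : y < n := lt_of_le_of_ne (mem_range_succ_iff.mp hy) hyn
    rw [zero_pow (Nat.mul_ne_zero (Nat.sub_ne_zero_of_lt hlt) hy0), mul_zero]

theorem pow_add_pow_pos_of_add_pos {R : Type*} [Ring R] [LinearOrder R] [IsStrictOrderedRing R]
    {a b : R} (h : 0 < a + b) (n : ℕ) : 0 < a ^ n + b ^ n := by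
  rcases n.even_or_odd with hn | hn
  · obtain ha | hb : 0 < a ∨ 0 < b := by
      by_contra! hle
      exact h.not_ge (add_nonpos hle.1 hle.2)
    · exact add_pos_of_pos_of_nonneg (pow_pos ha n) (hn.pow_nonneg b)
    · exact add_pos_of_nonneg_of_pos (hn.pow_nonneg a) (pow_pos hb n)
  · have hlt : (-b) ^ n < a ^ n := hn.pow_lt_pow.mpr (neg_lt_iff_pos_add.mpr h)
    rwa [hn.neg_pow, neg_lt_iff_pos_add] at hlt

theorem K_zero_zero {n : ℕ} (hn : n ≠ 0) (ψ : ℝ) : K n 0 ψ 0 = ψ ^ n + (1 - ψ) ^ n := by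
  simpa [K] using sum_range_succ_mul_zero_pow hn
    (fun y => (n.choose y : ℝ) * ψ ^ y * (1 - ψ) ^ (n - y))

theorem continuous_K (n a : ℕ) (ψ : ℝ) : Continuous (K n a ψ) := by
  unfold K
  fun_prop

theorem lmbdMean_eq_div (n : ℕ) (ψ ω : ℝ) :
    lmbdMean n ψ ω =
      (∑ y ∈ range (n + 1),
        (y * (n.choose y * ψ ^ y * (1 - ψ) ^ (n - y)) : ℝ) * ω ^ ((n - y) * y)) / K n 0 ψ ω := by
  simp only [lmbdMean, lmbd, sum_div, mul_div_assoc, mul_assoc]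

theorem lmbdMean_zero {n : ℕ} (hn : n ≠ 0) (ψ : ℝ) :
    lmbdMean n ψ 0 = n * ψ ^ n / (ψ ^ n + (1 - ψ) ^ n) := by
  rw [lmbdMean_eq_div, K_zero_zero hn, sum_range_succ_mul_zero_pow hn]
  simp

theorem continuousAt_lmbdMean {n : ℕ} {ψ ω : ℝ} (h : K n 0 ψ ω ≠ 0) :
    ContinuousAt (lmbdMean n ψ) ω := by
  rw [funext (lmbdMean_eq_div n ψ)]
  exact ContinuousAt.div (by fun_prop) (continuous_K n 0 ψ).continuousAt h

theorem stmt_4_general {n : ℕ} (hn : n ≠ 0) (ψ : ℝ) :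
    Tendsto (lmbdMean n ψ) (nhds 0) (nhds (n * ψ ^ n / (ψ ^ n + (1 - ψ) ^ n))) := by
  have hK : K n 0 ψ 0 ≠ 0 := by
    rw [K_zero_zero hn]
    exact (pow_add_pow_pos_of_add_pos (by simp) n).ne'
  rw [← lmbdMean_zero hn]
  exact continuousAt_lmbdMean hK

theorem stmt_4 (n : ℕ) (hn : 1 ≤ n) (ψ : ℝ) (hψ0 : 0 < ψ) (hψ1 : ψ < 1) :
    Filter.Tendsto (fun ω : ℝ => lmbdMean n ψ ω) (nhdsWithin 0 (Set.Ioi 0))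
      (nhds ((n : ℝ) * ψ ^ n / (ψ ^ n + (1 - ψ) ^ n))) :=
  (stmt_4_general (Nat.one_le_iff_ne_zero.mp hn) ψ).mono_left nhdsWithin_le_nhds
end

section
/- Let n ≥ 1 be an odd integer and let ψ be a real with 0 < ψ < 1. Then, as ω → +∞, τ_1(ψ,ω) tends to ((n−1)/2 + ψ)/(nψ). -/
open Filter Finset

/-!
Since `y * C(n, y) = n * C(n - 1, y - 1)`, the product `n ψ τ₁` is the mean of the pmf `lmbd`, whose
weights are binomial weights multiplied by `ω ^ ((n - y) * y)`. For `n = 2 m + 1` the exponent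
`(n - y) * y = m (m + 1) - (y - m) (y - (m + 1))` is maximal exactly at `y = m` and `y = m + 1`, and
the binomial weights of these two points are in the ratio `(1 - ψ) : ψ`. As `ω → ∞` the mean thus
tends to `(1 - ψ) m + ψ (m + 1) = m + ψ`.
-/

/-- The probability `C(n, y) ψ ^ y (1 - ψ) ^ (n - y)` of `y` successes in `n` independent trials:
the coefficient of the power of `ω` in the unnormalised `lmbd n ψ ω y`. -/
noncomputable def binomialWeight (n : ℕ) (ψ : ℝ) (y : ℕ) : ℝ :=
  (n.choose y : ℝ) * ψ ^ y * (1 - ψ) ^ (n - y)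

lemma binomialWeight_two_mul_add_one_left (m : ℕ) (ψ : ℝ) :
    binomialWeight (2 * m + 1) ψ m = (2 * m + 1).choose m * (ψ * (1 - ψ)) ^ m * (1 - ψ) := by
  rw [binomialWeight, show 2 * m + 1 - m = m + 1 by lia, mul_pow]
  ring

lemma binomialWeight_two_mul_add_one_right (m : ℕ) (ψ : ℝ) :
    binomialWeight (2 * m + 1) ψ (m + 1) = (2 * m + 1).choose m * (ψ * (1 - ψ)) ^ m * ψ := by
  rw [binomialWeight, show 2 * m + 1 - (m + 1) = m by lia, Nat.choose_symm_half, mul_pow]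
  ring

lemma K_zero_eq_sum (n : ℕ) (ψ ω : ℝ) :
    K n 0 ψ ω = ∑ y ∈ range (n + 1), binomialWeight n ψ y * ω ^ ((n - y) * y) := rfl

lemma lmbd_eq_binomialWeight_mul_div (n : ℕ) (ψ ω : ℝ) (y : ℕ) :
    lmbd n ψ ω y = binomialWeight n ψ y * ω ^ ((n - y) * y) / K n 0 ψ ω := rfl

lemma choose_mul_descFactorial (n : ℕ) {y j : ℕ} (hjy : j ≤ y) :
    n.choose y * y.descFactorial j = n.descFactorial j * (n - j).choose (y - j) := by
  rw [Nat.descFactorial_eq_factorial_mul_choose, Nat.descFactorial_eq_factorial_mul_choose,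
    mul_left_comm, Nat.choose_mul hjy, mul_assoc]

lemma descFactorial_mul_pow_mul_K (n j : ℕ) (ψ ω : ℝ) :
    n.descFactorial j * ψ ^ j * K n j ψ ω =
      ∑ y ∈ range (n + 1), y.descFactorial j * (binomialWeight n ψ y * ω ^ ((n - y) * y)) := by
  have hzero {y : ℕ} (hy : y < j) : (y.descFactorial j : ℝ) = 0 := by
    rw [Nat.descFactorial_of_lt hy, Nat.cast_zero]
  rcases lt_or_ge n j with hnj | hjn
  · rw [hzero hnj, zero_mul, zero_mul, sum_eq_zero]
    intro y hy
    rw [hzero ((mem_range_succ_iff.mp hy).trans_lt hnj), zero_mul]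
  obtain ⟨k, rfl⟩ := Nat.exists_eq_add_of_le hjn
  have hhead : ∑ y ∈ range j, (y.descFactorial j : ℝ) *
      (binomialWeight (j + k) ψ y * ω ^ ((j + k - y) * y)) = 0 :=
    sum_eq_zero fun y hy => by rw [hzero (mem_range.mp hy), zero_mul]
  rw [add_assoc, sum_range_add, hhead, zero_add, K, Nat.add_sub_cancel_left, mul_sum]
  refine sum_congr rfl fun i _ => ?_
  have hchoose : ((j + k).choose (j + i) * (j + i).descFactorial j : ℝ) =
      (j + k).descFactorial j * k.choose i := by
    have h := choose_mul_descFactorial (j + k) (Nat.le_add_right j i)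
    rw [Nat.add_sub_cancel_left, Nat.add_sub_cancel_left] at h
    exact_mod_cast h
  rw [binomialWeight, Nat.add_sub_add_left, add_comm i j]
  linear_combination -ψ ^ (j + i) * (1 - ψ) ^ (k - i) * ω ^ ((k - i) * (j + i)) * hchoose

theorem descFactorial_mul_pow_mul_τ (n j : ℕ) (ψ ω : ℝ) :
    n.descFactorial j * ψ ^ j * τ n j ψ ω =
      ∑ y ∈ range (n + 1), y.descFactorial j * lmbd n ψ ω y := by
  simp only [τ, lmbd_eq_binomialWeight_mul_div, ← mul_div_assoc, ← sum_div,
    descFactorial_mul_pow_mul_K]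

theorem mul_τ_one_eq_lmbdMean (n : ℕ) (ψ ω : ℝ) : n * ψ * τ n 1 ψ ω = lmbdMean n ψ ω := by
  simpa only [Nat.descFactorial_one, pow_one, lmbdMean] using descFactorial_mul_pow_mul_τ n 1 ψ ω

section LeadingTerms

variable {ι 𝕜 : Type*} [Field 𝕜] [LinearOrder 𝕜] [IsStrictOrderedRing 𝕜] [TopologicalSpace 𝕜]
  [OrderTopology 𝕜] {s : Finset ι} {e : ι → ℕ} {M : ℕ}

lemma tendsto_sum_mul_pow_div_pow_atTop (c : ι → 𝕜) (he : ∀ i ∈ s, e i ≤ M) :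
    Tendsto (fun x : 𝕜 => (∑ i ∈ s, c i * x ^ e i) / x ^ M) atTop
      (nhds (∑ i ∈ s with e i = M, c i)) := by
  simp_rw [sum_div, sum_filter]
  refine tendsto_finsetSum s fun i hi => ?_
  split_ifs with hi_top
  · refine tendsto_const_nhds.congr' ?_
    filter_upwards [eventually_ne_atTop 0] with x hx
    rw [hi_top, mul_div_cancel_right₀ _ (pow_ne_zero M hx)]
  · simpa only [mul_div_assoc, mul_zero] using
      (tendsto_pow_div_pow_atTop_zero (lt_of_le_of_ne (he i hi) hi_top)).const_mul (c i)

theorem tendsto_sum_mul_pow_div_sum_mul_pow_atTop (b c : ι → 𝕜) (he : ∀ i ∈ s, e i ≤ M)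
    (hc : ∑ i ∈ s with e i = M, c i ≠ 0) :
    Tendsto (fun x : 𝕜 => (∑ i ∈ s, b i * x ^ e i) / ∑ i ∈ s, c i * x ^ e i) atTop
      (nhds ((∑ i ∈ s with e i = M, b i) / ∑ i ∈ s with e i = M, c i)) := by
  refine ((tendsto_sum_mul_pow_div_pow_atTop b he).div
    (tendsto_sum_mul_pow_div_pow_atTop c he) hc).congr' ?_
  filter_upwards [eventually_ne_atTop 0] with x hx
  exact div_div_div_cancel_right₀ (pow_ne_zero M hx) _ _

end LeadingTerms

lemma two_mul_add_one_sub_mul_self_add {m y : ℕ} (hy : y ≤ 2 * m + 1) :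
    (((2 * m + 1 - y) * y : ℕ) : ℤ) + (y - m) * (y - (m + 1)) = m * (m + 1) := by
  push_cast [hy]
  ring

lemma two_mul_add_one_sub_mul_self_le {m y : ℕ} (hy : y ≤ 2 * m + 1) :
    (2 * m + 1 - y) * y ≤ m * (m + 1) := by
  have hconsecutive : (0 : ℤ) ≤ (y - m) * (y - (m + 1)) := by
    rcases le_or_gt y m with h | h
    · exact mul_nonneg_of_nonpos_of_nonpos (by lia) (by lia)
    · exact mul_nonneg (by lia) (by lia)
  have hexponent := two_mul_add_one_sub_mul_self_add hy
  lia

lemma two_mul_add_one_sub_mul_self_eq_iff {m y : ℕ} (hy : y ≤ 2 * m + 1) :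
    (2 * m + 1 - y) * y = m * (m + 1) ↔ y = m ∨ y = m + 1 := by
  have hroots : (2 * m + 1 - y) * y = m * (m + 1) ↔ ((y : ℤ) - m) * (y - (m + 1)) = 0 := by
    rw [← @Nat.cast_inj ℤ, Nat.cast_mul m, Nat.cast_succ,
      ← two_mul_add_one_sub_mul_self_add hy, left_eq_add]
  rw [hroots, mul_eq_zero]
  lia

lemma filter_two_mul_add_one_sub_mul_self_eq (m : ℕ) :
    {y ∈ range (2 * m + 1 + 1) | (2 * m + 1 - y) * y = m * (m + 1)} = {m, m + 1} := by
  ext y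
  simp only [mem_filter, mem_range_succ_iff, mem_insert, mem_singleton]
  rw [and_congr_right fun hy => two_mul_add_one_sub_mul_self_eq_iff hy]
  lia

theorem tendsto_sum_mul_lmbd_two_mul_add_one (m : ℕ) {ψ : ℝ} (hψ0 : ψ ≠ 0) (hψ1 : ψ ≠ 1)
    (f : ℕ → ℝ) :
    Tendsto (fun ω : ℝ => ∑ y ∈ range (2 * m + 1 + 1), f y * lmbd (2 * m + 1) ψ ω y) atTop
      (nhds ((1 - ψ) * f m + ψ * f (m + 1))) := by
  set A : ℝ := (2 * m + 1).choose m * (ψ * (1 - ψ)) ^ m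
  have hA : A ≠ 0 := mul_ne_zero (Nat.cast_ne_zero.mpr (Nat.choose_pos (by lia)).ne')
    (pow_ne_zero m (mul_ne_zero hψ0 (sub_ne_zero.mpr hψ1.symm)))
  have htop (g : ℕ → ℝ) : ∑ y ∈ range (2 * m + 1 + 1) with (2 * m + 1 - y) * y = m * (m + 1),
      g y * binomialWeight (2 * m + 1) ψ y = A * ((1 - ψ) * g m + ψ * g (m + 1)) := by
    rw [filter_two_mul_add_one_sub_mul_self_eq, sum_pair m.succ_ne_self.symm,
      binomialWeight_two_mul_add_one_left, binomialWeight_two_mul_add_one_right]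
    ring
  have hmass : ∑ y ∈ range (2 * m + 1 + 1) with (2 * m + 1 - y) * y = m * (m + 1),
      binomialWeight (2 * m + 1) ψ y = A := by
    simpa using htop 1
  have hlim := tendsto_sum_mul_pow_div_sum_mul_pow_atTop
    (fun y => f y * binomialWeight (2 * m + 1) ψ y) (binomialWeight (2 * m + 1) ψ)
    (fun y hy => two_mul_add_one_sub_mul_self_le (mem_range_succ_iff.mp hy)) (hmass ▸ hA)
  rw [htop, hmass, mul_div_cancel_left₀ _ hA] at hlim
  simpa only [lmbd_eq_binomialWeight_mul_div, K_zero_eq_sum, ← mul_div_assoc, ← sum_div,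
    mul_assoc] using hlim

theorem tendsto_lmbdMean_two_mul_add_one (m : ℕ) {ψ : ℝ} (hψ0 : ψ ≠ 0) (hψ1 : ψ ≠ 1) :
    Tendsto (fun ω : ℝ => lmbdMean (2 * m + 1) ψ ω) atTop (nhds (m + ψ)) := by
  have hmean : (m + ψ : ℝ) = (1 - ψ) * m + ψ * (m + 1 : ℕ) := by push_cast; ring
  exact hmean ▸ tendsto_sum_mul_lmbd_two_mul_add_one m hψ0 hψ1 Nat.cast

theorem stmt_11_general {n : ℕ} (hn : Odd n) {ψ : ℝ} (hψ0 : ψ ≠ 0) (hψ1 : ψ ≠ 1) :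
    Tendsto (fun ω : ℝ => τ n 1 ψ ω) atTop (nhds ((((n : ℝ) - 1) / 2 + ψ) / (n * ψ))) := by
  have hnψ : (n : ℝ) * ψ ≠ 0 := mul_ne_zero (Nat.cast_ne_zero.mpr hn.pos.ne') hψ0
  have hτ (ω : ℝ) : τ n 1 ψ ω = lmbdMean n ψ ω / (n * ψ) :=
    eq_div_of_mul_eq hnψ (by rw [mul_comm, mul_τ_one_eq_lmbdMean])
  obtain ⟨m, rfl⟩ := hn
  have hm : (((2 * m + 1 : ℕ) : ℝ) - 1) / 2 = m := by push_cast; ring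
  simp only [hτ, hm]
  exact (tendsto_lmbdMean_two_mul_add_one m hψ0 hψ1).div_const _

theorem stmt_11 (n : ℕ) (hn : 1 ≤ n) (hno : Odd n)
    (ψ : ℝ) (hψ0 : 0 < ψ) (hψ1 : ψ < 1) :
    Filter.Tendsto (fun ω : ℝ => τ n 1 ψ ω) Filter.atTop
      (nhds ((((n : ℝ) - 1) / 2 + ψ) / ((n : ℝ) * ψ))) :=
  stmt_11_general hno hψ0.ne' hψ1.ne
end
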